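/- For the cubic Volterra Poisson tensor Q on ℝⁿ and the vector field Z₀ = c₁ ∂/∂c₁ + cₙ ∂/∂cₙ, the Lie derivative satisfies L_{Z₀} Q = Z₀ ∧ W₀, where W₀ = c₁cₙ(∂/∂c₁ - ∂/∂cₙ) + c₁c₂ ∂/∂c₂ - c_{n-1}cₙ ∂/∂c_{n-1}. -/

import Mathlib

open scoped BigOperators

/-- Partial derivative of a function on `ℝ^n` in the `i`-th coordinate direction. -/
noncomputable def pderiv {n : ℕ} (i : Fin n) (f : (Fin n → ℝ) → ℝ) (x : Fin n → ℝ) : ℝ :=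
  fderiv ℝ f x (Pi.single i 1)

/-- The Jacobi identity for a bivector field written in coordinates. -/
def JacobiId {n : ℕ} (P : (Fin n → ℝ) → Fin n → Fin n → ℝ) : Prop :=
  ∀ x i j k, ∑ l, (P x l j * pderiv l (fun y => P y i k) x
    + P x l i * pderiv l (fun y => P y k j) x
    + P x l k * pderiv l (fun y => P y j i) x) = 0

/-- Kronecker delta on `Fin n`, valued in `ℝ`. -/
def kdelta {n : ℕ} (i j : Fin n) : ℝ := if i = j then 1 else 0

/-- The quadratic Poisson tensor of the periodic `n`-site Volterra lattice:
`P^{ij} = cᵢ cⱼ (δ_{i+1,j} - δ_{j+1,i})`, indices mod `n`. -/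
def Pvolt {n : ℕ} [NeZero n] (c : Fin n → ℝ) (i j : Fin n) : ℝ :=
  c i * c j * (kdelta (i + 1) j - kdelta (j + 1) i)

/-- The cubic Poisson tensor of the periodic `n`-site Volterra lattice. -/
def Qvolt {n : ℕ} [NeZero n] (c : Fin n → ℝ) (i j : Fin n) : ℝ :=
  c i * c j * (c i + c j) * (kdelta (i + 1) j - kdelta (j + 1) i)
    + c i * c (i + 1) * c (i + 2) * kdelta (i + 2) j
    - c i * c (i - 1) * c (i - 2) * kdelta (i - 2) j

/-- The index of `cₙ` (the last coordinate) in `Fin n`. -/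
def lastI (n : ℕ) [NeZero n] : Fin n := (0 : Fin n) - 1

/-- The vector field `Z₀ = c₁ ∂/∂c₁ + cₙ ∂/∂cₙ` (components). -/
def Z0 {n : ℕ} [NeZero n] (x : Fin n → ℝ) (i : Fin n) : ℝ :=
  if i = 0 then x i else if i = lastI n then x i else 0

/-- Lie derivative of a bivector field `P` along a vector field `Z`, in coordinates:
`(L_Z P)^{ij} = Σₗ (Zˡ ∂ₗ P^{ij} − P^{lj} ∂ₗ Zⁱ − P^{il} ∂ₗ Zʲ)`. -/
noncomputable def lieDerivBivector {n : ℕ} (Z : (Fin n → ℝ) → Fin n → ℝ)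
    (P : (Fin n → ℝ) → Fin n → Fin n → ℝ) (x : Fin n → ℝ) (i j : Fin n) : ℝ :=
  ∑ l, (Z x l * pderiv l (fun y => P y i j) x
    - P x l j * pderiv l (fun y => Z y i) x
    - P x i l * pderiv l (fun y => Z y j) x)

/-- The vector field `W₀ = c₁cₙ(∂/∂c₁ - ∂/∂cₙ) + c₁c₂ ∂/∂c₂ − c_{n-1}cₙ ∂/∂c_{n-1}`
(components). -/
def W0 {n : ℕ} [NeZero n] (x : Fin n → ℝ) (i : Fin n) : ℝ :=
  (if i = 0 then x 0 * x (lastI n) else 0)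
    + (if i = lastI n then -(x 0 * x (lastI n)) else 0)
    + (if i = 1 then x 0 * x 1 else 0)
    + (if i = lastI n - 1 then -(x (lastI n - 1) * x (lastI n)) else 0)

/-!
In the frame `Xₖ = cₖ ∂/∂cₖ` of commuting fields the cubic tensor decouples into decomposable
bivectors with linear coefficients, `Q = ∑ₖ cₖ (Xₖ₋₁ + Xₖ) ∧ (Xₖ + Xₖ₊₁)`. Since `Xₖ` annihilates
every `cₗ` with `l ≠ k`, the Lie derivative along `Xₖ` picks out the `k`-th summand. Adding the
summands of the neighbours `c₁` and `cₙ`, which share the factor `Z₀ = X₁ + Xₙ`, gives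
`Z₀ ∧ (c₁ (X₁ + X₂) - cₙ (Xₙ₋₁ + Xₙ))`, and the second factor is `W₀ + (c₁ - cₙ) Z₀`.
-/

section Wedge

variable {ι R : Type*} [CommRing R]

/-- The coordinates `(u ∧ v)^{ij} = uⁱvʲ - uʲvⁱ` of the wedge product of two vectors. -/
def wedge (u v : ι → R) (i j : ι) : R :=
  u i * v j - u j * v i

lemma wedge_apply_self (u v : ι → R) (i : ι) : wedge u v i i = 0 :=
  sub_self _

lemma wedge_mul_mul_apply (c u v : ι → R) (i j : ι) :
    wedge (u * c) (v * c) i j = c i * c j * wedge u v i j := by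
  simp only [wedge, Pi.mul_apply]
  ring

lemma smul_wedge_add_smul_wedge (r s t : R) (u v z : ι → R) :
    s • wedge z v + t • wedge u z = wedge z (s • v - t • u - r • z) := by
  ext i j
  simp only [wedge, Pi.add_apply, Pi.sub_apply, Pi.smul_apply, smul_eq_mul]
  ring

end Wedge

section DiagonalField

variable {n : ℕ}

lemma sum_mul_pderiv (v : Fin n → ℝ) (f : (Fin n → ℝ) → ℝ) (x : Fin n → ℝ) :
    ∑ l, v l * pderiv l f x = fderiv ℝ f x v := by
  conv_rhs => rw [pi_eq_sum_univ' v]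
  simp only [pderiv, map_sum, map_smul, smul_eq_mul]

lemma pderiv_const_mul_eval (r : ℝ) (i l : Fin n) (x : Fin n → ℝ) :
    pderiv l (fun y => r * y i) x = if l = i then r else 0 := by
  rw [pderiv, ((hasFDerivAt_apply i x).const_mul r).fderiv]
  simp [Pi.single_apply, eq_comm]

lemma lieDerivBivector_diagonal (a : Fin n → ℝ) (P : (Fin n → ℝ) → Fin n → Fin n → ℝ)
    (x : Fin n → ℝ) (i j : Fin n) :
    lieDerivBivector (fun y => a * y) P x i j =
      fderiv ℝ (fun y => P y i j) x (a * x) - (a i + a j) * P x i j := by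
  rw [lieDerivBivector, Finset.sum_sub_distrib, Finset.sum_sub_distrib, sum_mul_pderiv]
  simp only [Pi.mul_apply, pderiv_const_mul_eval, mul_ite, mul_zero, Finset.sum_ite_eq',
    Finset.mem_univ, if_true]
  ring

/-- The weights `a i + a j` produced by the factor `y i * y j` cancel the terms of the Lie
derivative that differentiate the field, so only the coefficient `B` is differentiated. -/
lemma lieDerivBivector_diagonal_mul {B : (Fin n → ℝ) → Fin n → Fin n → ℝ} {x : Fin n → ℝ}
    {i j : Fin n} (hB : DifferentiableAt ℝ (fun y => B y i j) x) (a : Fin n → ℝ) :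
    lieDerivBivector (fun y => a * y) (fun y k l => y k * y l * B y k l) x i j =
      x i * x j * fderiv ℝ (fun y => B y i j) x (a * x) := by
  have hP := ((hasFDerivAt_apply (𝕜 := ℝ) i x).fun_mul (hasFDerivAt_apply j x)).fun_mul
    hB.hasFDerivAt
  rw [lieDerivBivector_diagonal, hP.fderiv]
  simp only [smul_add, add_apply, smul_apply, smul_eq_mul, ContinuousLinearMap.proj_apply,
    Pi.mul_apply]
  ring

end DiagonalField

section Kronecker

variable {n : ℕ}

lemma kdelta_comm (i j : Fin n) : kdelta i j = kdelta j i :=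
  if_congr eq_comm rfl rfl

lemma kdelta_sub_left [NeZero n] (i j k : Fin n) : kdelta (i - k) j = kdelta i (j + k) :=
  if_congr sub_eq_iff_eq_add rfl rfl

lemma mul_kdelta_eq (f : Fin n → ℝ) (i j : Fin n) : f i * kdelta i j = f j * kdelta i j := by
  unfold kdelta
  split_ifs with h
  · rw [h]
  · simp only [mul_zero]

lemma sum_kdelta_mul (f : Fin n → ℝ) (i : Fin n) : ∑ k, kdelta k i * f k = f i := by
  simp [kdelta]

lemma sum_kdelta_pred_add_kdelta_mul [NeZero n] (f : Fin n → ℝ) (i : Fin n) :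
    ∑ k, (kdelta (k - 1) i + kdelta k i) * f k = f (i + 1) + f i := by
  simp only [kdelta_sub_left, add_mul, Finset.sum_add_distrib, sum_kdelta_mul]

lemma ite_eq_mul_kdelta (i k : Fin n) (r : ℝ) : (if i = k then r else 0) = r * kdelta k i := by
  rw [kdelta_comm, kdelta, mul_boole]

lemma single_one_apply_eq_kdelta (i k : Fin n) : (Pi.single k 1 : Fin n → ℝ) i = kdelta k i := by
  rw [Pi.single_apply, ite_eq_mul_kdelta, one_mul]

end Kronecker

section Volterra

variable {n : ℕ} [NeZero n]

/-- The constant bivector `(eₖ₋₁ + eₖ) ∧ (eₖ + eₖ₊₁)`, indices mod `n`: the coefficient of `cₖ` in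
the cubic Volterra tensor expressed in the frame `cᵢ ∂/∂cᵢ`. -/
def volterraStencil (k : Fin n) : Fin n → Fin n → ℝ :=
  wedge (Pi.single (k - 1) 1 + Pi.single k 1) (Pi.single k 1 + Pi.single (k + 1) 1)

lemma one_add_one_eq_two_fin : (1 : Fin n) + 1 = 2 := by
  ext
  simp [Fin.val_add]

lemma sum_mul_volterraStencil (x : Fin n → ℝ) (i j : Fin n) :
    ∑ k, x k * volterraStencil k i j =
      (x i + x j) * (kdelta (i + 1) j - kdelta (j + 1) i)
        + x (i + 1) * kdelta (i + 2) j - x (j + 1) * kdelta (j + 2) i := by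
  have hsum (k l : Fin n) :
      ∑ m, x m * ((kdelta (m - 1) k + kdelta m k) * (kdelta m l + kdelta (m + 1) l)) =
        x (k + 1) * (kdelta (k + 1) l + kdelta (k + 2) l)
          + x k * (kdelta k l + kdelta (k + 1) l) := by
    simp only [mul_left_comm (x _), sum_kdelta_pred_add_kdelta_mul, add_assoc k,
      one_add_one_eq_two_fin]
  simp only [volterraStencil, wedge, Pi.add_apply, single_one_apply_eq_kdelta, mul_sub,
    Finset.sum_sub_distrib, hsum]
  linear_combination mul_kdelta_eq x (i + 1) j - mul_kdelta_eq x (j + 1) i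
    + mul_kdelta_eq x i j + x j * kdelta_comm i j

lemma Qvolt_eq_sum (x : Fin n → ℝ) (i j : Fin n) :
    Qvolt x i j = x i * x j * ∑ k, x k * volterraStencil k i j := by
  have hfwd : x (i + 2) * kdelta (i + 2) j = x j * kdelta (i + 2) j :=
    mul_kdelta_eq x (i + 2) j
  have hbwd : x (i - 1) * x (i - 2) * kdelta (i - 2) j = x (j + 1) * x j * kdelta (j + 2) i := by
    have hsub : i - 1 = i - 2 + 1 := by
      rw [← one_add_one_eq_two_fin]
      abel
    rw [hsub, mul_kdelta_eq (fun k => x (k + 1) * x k), kdelta_sub_left, kdelta_comm]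
  rw [sum_mul_volterraStencil, Qvolt]
  linear_combination x i * x (i + 1) * hfwd - x i * hbwd

lemma Qvolt_self (x : Fin n → ℝ) (i : Fin n) : Qvolt x i i = 0 := by
  simp only [Qvolt_eq_sum, volterraStencil, wedge_apply_self, mul_zero, Finset.sum_const_zero]

lemma lieDerivBivector_diagonal_Qvolt (a x : Fin n → ℝ) (i j : Fin n) :
    lieDerivBivector (fun y => a * y) Qvolt x i j =
      x i * x j * ∑ k, a k * x k * volterraStencil k i j := by
  have hB : HasFDerivAt (fun y : Fin n → ℝ => ∑ k, y k * volterraStencil k i j)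
      (∑ k, volterraStencil k i j • ContinuousLinearMap.proj (R := ℝ) k) x :=
    HasFDerivAt.fun_sum fun k _ => (hasFDerivAt_apply k x).mul_const _
  have hQ : Qvolt = fun (y : Fin n → ℝ) k l => y k * y l * ∑ m, y m * volterraStencil m k l := by
    ext y k l
    exact Qvolt_eq_sum y k l
  rw [hQ, lieDerivBivector_diagonal_mul hB.differentiableAt, hB.fderiv]
  simp [mul_comm]

lemma lieDerivBivector_Qvolt_of_subsingleton [Subsingleton (Fin n)]
    (Z : (Fin n → ℝ) → Fin n → ℝ) (x : Fin n → ℝ) (i j : Fin n) :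
    lieDerivBivector Z Qvolt x i j = 0 := by
  have hQ (y : Fin n → ℝ) (k l : Fin n) : Qvolt y k l = 0 :=
    Subsingleton.elim k l ▸ Qvolt_self y k
  simp [lieDerivBivector, pderiv, hQ]

lemma lastI_ne_zero [Nontrivial (Fin n)] : lastI n ≠ 0 := by
  simpa [lastI] using (Nat.lt_of_succ_le (Fin.nontrivial_iff_two_le.1 ‹_›)).ne'

lemma Z0_eq_mul [Nontrivial (Fin n)] (x : Fin n → ℝ) :
    Z0 x = (Pi.single (lastI n) 1 + Pi.single 0 1) * x := by
  ext i
  have hlast := lastI_ne_zero (n := n)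
  simp only [Z0, Pi.mul_apply, Pi.add_apply, Pi.single_apply]
  grind

lemma W0_eq_mul (x : Fin n → ℝ) :
    W0 x = (x 0 • (Pi.single 0 1 + Pi.single 1 1)
      - x (lastI n) • (Pi.single (lastI n - 1) 1 + Pi.single (lastI n) 1)
      - (x 0 - x (lastI n)) • (Pi.single (lastI n) 1 + Pi.single 0 1)) * x := by
  ext i
  simp only [W0, Pi.mul_apply, Pi.sub_apply, Pi.add_apply, Pi.smul_apply, smul_eq_mul,
    single_one_apply_eq_kdelta, ite_eq_mul_kdelta]
  linear_combination x (lastI n) * mul_kdelta_eq x 0 i - x 0 * mul_kdelta_eq x (lastI n) i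
    + x 0 * mul_kdelta_eq x 1 i - x (lastI n) * mul_kdelta_eq x (lastI n - 1) i

lemma volterraStencil_zero : volterraStencil (0 : Fin n) =
    wedge (Pi.single (lastI n) 1 + Pi.single 0 1) (Pi.single 0 1 + Pi.single 1 1) := by
  rw [volterraStencil, lastI, zero_add]

lemma volterraStencil_lastI : volterraStencil (lastI n) =
    wedge (Pi.single (lastI n - 1) 1 + Pi.single (lastI n) 1)
      (Pi.single (lastI n) 1 + Pi.single 0 1) := by
  rw [volterraStencil, show lastI n + 1 = 0 from sub_add_cancel 0 1]

end Volterra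

theorem stmt12_general (n : ℕ) [NeZero n] (x : Fin n → ℝ) (i j : Fin n) :
    lieDerivBivector Z0 (fun c => Qvolt c) x i j = Z0 x i * W0 x j - Z0 x j * W0 x i := by
  change _ = wedge (Z0 x) (W0 x) i j
  rcases subsingleton_or_nontrivial (Fin n) with _ | _
  · rw [lieDerivBivector_Qvolt_of_subsingleton, Subsingleton.elim i j, wedge_apply_self]
  calc lieDerivBivector Z0 Qvolt x i j
    _ = x i * x j * ∑ k, (Pi.single (lastI n) 1 + Pi.single 0 1 : Fin n → ℝ) k * x k *
          volterraStencil k i j := by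
      rw [funext Z0_eq_mul, lieDerivBivector_diagonal_Qvolt]
    _ = x i * x j * (x 0 • volterraStencil (0 : Fin n) +
          x (lastI n) • volterraStencil (lastI n) : Fin n → Fin n → ℝ) i j := by
      simp [Pi.single_apply, add_mul, Finset.sum_add_distrib, add_comm]
    _ = wedge (Z0 x) (W0 x) i j := by
      rw [volterraStencil_zero, volterraStencil_lastI,
        smul_wedge_add_smul_wedge (x 0 - x (lastI n)), ← wedge_mul_mul_apply, ← Z0_eq_mul,
        ← W0_eq_mul]

/-- The Lie derivative of the cubic Volterra Poisson tensor `Q` along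
`Z₀ = c₁ ∂/∂c₁ + cₙ ∂/∂cₙ` is the decomposable bivector `Z₀ ∧ W₀`. -/
theorem stmt12 (n : ℕ) [NeZero n] (hn : 5 ≤ n) (x : Fin n → ℝ) (i j : Fin n) :
    lieDerivBivector Z0 (fun c => Qvolt c) x i j = Z0 x i * W0 x j - Z0 x j * W0 x i := by
  exact stmt12_general n x i j
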